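/- For all constants 0 < δ ≤ Δ there exist c > 0 and T₀ ∈ ℕ such that: for every integer k ≥ 2, every Alice value density v_A, every deterministic Alice strategy for the repeated k-cut game, and every horizon T ≥ T₀, there exists a Bob value density v_B (measurable, bounded above and below by positive constants depending only on δ and Δ, with total integral 1) such that Alice's Stackelberg regret against the myopic Bob with value density v_B over horizon T is at least c·√T/k^{3/2}. -/

import Mathlib

open MeasureTheory Set

noncomputable section

attribute [local instance] Classical.propDecidable

/-- A value density: measurable, bounded in `[δ, Δ]` on `[0,1]`, integrating to 1 on `[0,1]`. -/
def IsValueDensity (δ Δ : ℝ) (v : ℝ → ℝ) : Prop :=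
  Measurable v ∧ (∀ x ∈ Set.Icc (0:ℝ) 1, v x ∈ Set.Icc δ Δ) ∧
    (∫ x in Set.Icc (0:ℝ) 1, v x) = 1

/-- The value of a piece `S` under density `v`. -/
def pieceVal (v : ℝ → ℝ) (S : Set ℝ) : ℝ := ∫ x in S, v x

/-- Extended cut points: `0, c 0, …, c (k-1), 1`. -/
def extCuts (k : ℕ) (c : Fin k → ℝ) : ℕ → ℝ := fun i =>
  if i = 0 then 0 else if h : i - 1 < k then c ⟨i - 1, h⟩ else 1

/-- A valid vector of `k` cut points: nondecreasing, within `[0,1]`. -/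
def ValidCuts (k : ℕ) (c : Fin k → ℝ) : Prop :=
  Monotone c ∧ ∀ i, c i ∈ Set.Icc (0:ℝ) 1

/-- The two pieces of the alternating partition induced by cuts `c`:
`true` gives the union of even-indexed intervals, `false` the odd-indexed ones. -/
def altPiece (k : ℕ) (c : Fin k → ℝ) (b : Bool) : Set ℝ :=
  ⋃ i ∈ Finset.range (k + 1),
    if decide (i % 2 = 0) = b then Set.Icc (extCuts k c i) (extCuts k c (i + 1)) else ∅

/-- Alice's Stackelberg value with `k` cuts: max of `V_A(Z_A)` over alternating partitions
`(Z_A, Z_B)` induced by `k` cut points with `V_B(Z_B) ≥ 1/2`. -/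
def stackelbergValue (k : ℕ) (vA vB : ℝ → ℝ) : ℝ :=
  sSup { u : ℝ | ∃ (c : Fin k → ℝ) (b : Bool), ValidCuts k c ∧
    1 / 2 ≤ pieceVal vB (altPiece k c (!b)) ∧ u = pieceVal vA (altPiece k c b) }

/-- A history of play: the list of (Alice's cuts, Bob's choice) in past rounds. -/
abbrev Hist (k : ℕ) := List ((Fin k → ℝ) × Bool)

/-- Alice's deterministic strategy: horizon and history ↦ next cut vector. -/
abbrev AliceStrategy (k : ℕ) := ℕ → Hist k → (Fin k → ℝ)

/-- Bob's deterministic strategy: horizon, history, and Alice's current cuts ↦ choice. -/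
abbrev BobStrategy (k : ℕ) := ℕ → Hist k → (Fin k → ℝ) → Bool

/-- The history of play after `t` rounds. -/
def playHist (k : ℕ) (SA : AliceStrategy k) (SB : BobStrategy k) (T : ℕ) : ℕ → Hist k
  | 0 => []
  | t + 1 =>
      let h := playHist k SA SB T t
      let cuts := SA T h
      h ++ [(cuts, SB T h cuts)]

/-- Alice's cuts in round `t` (0-indexed). -/
def roundCuts (k : ℕ) (SA : AliceStrategy k) (SB : BobStrategy k) (T t : ℕ) : Fin k → ℝ :=
  SA T (playHist k SA SB T t)

/-- Bob's choice in round `t` (0-indexed). -/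
def roundChoice (k : ℕ) (SA : AliceStrategy k) (SB : BobStrategy k) (T t : ℕ) : Bool :=
  SB T (playHist k SA SB T t) (roundCuts k SA SB T t)

/-- Alice's Stackelberg regret over horizon `T`: in each round she receives the value of
the piece Bob did not choose. -/
def aliceRegret (k : ℕ) (vA vB : ℝ → ℝ) (SA : AliceStrategy k) (SB : BobStrategy k)
    (T : ℕ) : ℝ :=
  ∑ t ∈ Finset.range T,
    (stackelbergValue k vA vB -
      pieceVal vA (altPiece k (roundCuts k SA SB T t) (!(roundChoice k SA SB T t))))

/-- Bob's regret over horizon `T` relative to always choosing his preferred piece. -/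
def bobRegret (k : ℕ) (vB : ℝ → ℝ) (SA : AliceStrategy k) (SB : BobStrategy k) (T : ℕ) : ℝ :=
  ∑ t ∈ Finset.range T,
    (max (pieceVal vB (altPiece k (roundCuts k SA SB T t) true))
        (pieceVal vB (altPiece k (roundCuts k SA SB T t) false)) -
      pieceVal vB (altPiece k (roundCuts k SA SB T t) (roundChoice k SA SB T t)))

/-- Bob's strategy guarantees regret at most `R T` against every Alice strategy and horizon. -/
def BobGuarantees (k : ℕ) (vB : ℝ → ℝ) (SB : BobStrategy k) (R : ℕ → ℝ) : Prop :=
  ∀ (SA : AliceStrategy k) (T : ℕ), bobRegret k vB SA SB T ≤ R T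

/-- The myopic Bob: chooses the piece of larger `V_B`-value, breaking ties towards
the piece of smaller `V_A`-value. -/
def myopicBob (k : ℕ) (vA vB : ℝ → ℝ) : BobStrategy k := fun _ _ c =>
  if pieceVal vB (altPiece k c false) < pieceVal vB (altPiece k c true) then true
  else if pieceVal vB (altPiece k c true) < pieceVal vB (altPiece k c false) then false
  else if pieceVal vA (altPiece k c true) ≤ pieceVal vA (altPiece k c false) then true
  else false

/-- Alice's strategy always produces valid cut vectors. -/
def AliceValid (k : ℕ) (SA : AliceStrategy k) : Prop := ∀ T h, ValidCuts k (SA T h)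

/-!
Bob's density is Alice's, scaled down on a set `L` (`lowSet`) and up off it. `L` is the even piece
of a partition, and Bob's half leaves Alice room for `L` plus the value of a short interval
`(s, s + margin]` next to it. By a fractional knapsack argument, a partition that is nearly optimal
for Alice agrees with `L` somewhere in each of `k + 1` intervals that lie alternately inside and
outside `L`. This takes all `k` cuts, so the piece meets `(s, s + margin]` in an initial segment.

Now hide in `(s, s + margin]` a bump of half-width `w` that moves some of Bob's value to the right.
It can only lower Bob's value of a piece that meets its support in an initial segment, so Bob's
choice changes only if a cut of a far from optimal round falls inside the bump. With `m` disjoint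
candidate bumps there are two cases. Either at least `m / k` rounds are far from optimal, each
losing a constant times `1 / k`; or some bump is untouched, and then the play is the same as without
the bump while the Stackelberg value is larger by `δ * w / 2`, where `w` is of order `1 / (k * m)`.
The choice `m ≈ √(k * T)` balances the two.
-/

section Pieces

variable {k n : ℕ} {c c' : Fin k → ℝ} {b : Bool} {x y : ℝ}

/-- The number of cuts strictly to the left of `x`: the index `i` of the half-open interval
`(x_i, x_{i+1}]` that contains `x`. -/
def cutCount (c : Fin k → ℝ) (x : ℝ) : ℕ := Finset.card {i | c i < x}

/-- The alternating pieces built from the intervals `(x_i, x_{i+1}]` instead of `[x_i, x_{i+1}]`.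
They agree with `altPiece` up to a null set, and are complementary in `[0,1]`. -/
def halfOpenPiece (c : Fin k → ℝ) (b : Bool) : Set ℝ :=
  {x | x ∈ Icc (0 : ℝ) 1 ∧ decide (cutCount c x % 2 = 0) = b}

lemma cutCount_mono (c : Fin k → ℝ) : Monotone (cutCount c) := fun _ _ hxy =>
  Finset.card_le_card <| Finset.monotone_filter_right _ fun _ _ hi => hi.trans_le hxy

lemma cutCount_le (c : Fin k → ℝ) (x : ℝ) : cutCount c x ≤ k :=
  (Finset.card_le_univ _).trans_eq (Fintype.card_fin k)

lemma cutCount_congr (h : ∀ i, c i < x ↔ c' i < y) : cutCount c x = cutCount c' y := by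
  simp only [cutCount, h]

lemma cutCount_eq (hn : n ≤ k) (h : ∀ i : Fin k, c i < x ↔ (i : ℕ) < n) : cutCount c x = n := by
  simpa [cutCount, h, Fin.card_filter_val_lt] using hn

lemma lt_iff_lt_cutCount (hc : Monotone c) (i : Fin k) : c i < x ↔ (i : ℕ) < cutCount c x := by
  constructor
  · intro h
    have hsub : Finset.Iic i ⊆ ({j | c j < x} : Finset (Fin k)) := fun j hj => by
      simpa using (hc (Finset.mem_Iic.1 hj)).trans_lt h
    simpa [cutCount] using Finset.card_le_card hsub
  · contrapose!
    intro h
    have hsub : ({j | c j < x} : Finset (Fin k)) ⊆ Finset.Iio i := fun j hj =>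
      Finset.mem_Iio.2 <| hc.reflect_lt <| (Finset.mem_filter.1 hj).2.trans_le h
    simpa [cutCount] using Finset.card_le_card hsub

lemma halfOpenPiece_subset (c : Fin k → ℝ) (b : Bool) : halfOpenPiece c b ⊆ Icc 0 1 :=
  fun _ hx => hx.1

lemma measurableSet_halfOpenPiece (c : Fin k → ℝ) (b : Bool) :
    MeasurableSet (halfOpenPiece c b) :=
  measurableSet_Icc.inter <| (cutCount_mono c).measurable <|
    MeasurableSet.of_discrete (s := {n | decide (n % 2 = 0) = b})

lemma halfOpenPiece_not (c : Fin k → ℝ) (b : Bool) :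
    halfOpenPiece c (!b) = Icc 0 1 \ halfOpenPiece c b := by
  ext x
  cases b <;> simp +contextual [halfOpenPiece]

lemma mem_halfOpenPiece_true (hx : x ∈ Icc (0 : ℝ) 1) :
    x ∈ halfOpenPiece c true ↔ cutCount c x % 2 = 0 := by
  simp [halfOpenPiece, hx.1, hx.2]

lemma extCuts_succ (k : ℕ) (c : Fin k → ℝ) (i : ℕ) :
    extCuts k c (i + 1) = if h : i < k then c ⟨i, h⟩ else 1 := by
  simp [extCuts]

lemma extCuts_mem_Icc (hc : ValidCuts k c) (i : ℕ) : extCuts k c i ∈ Icc (0 : ℝ) 1 := by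
  unfold extCuts
  split_ifs
  · simp
  · exact hc.2 _
  · simp

lemma extCuts_le_iff (hc : ValidCuts k c) (hx : 0 ≤ x) (hxc : x ∉ range c) (hn : n ≤ k) :
    extCuts k c n ≤ x ↔ n ≤ cutCount c x := by
  cases n with
  | zero => simp [extCuts, hx]
  | succ i =>
    have hne : c ⟨i, hn⟩ ≠ x := fun h => hxc ⟨_, h⟩
    rw [extCuts_succ, dif_pos (show i < k from hn), hne.le_iff_lt, lt_iff_lt_cutCount hc.1]
    rfl

lemma le_extCuts_succ_iff (hc : ValidCuts k c) (hx : x ≤ 1) (n : ℕ) :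
    x ≤ extCuts k c (n + 1) ↔ cutCount c x ≤ n := by
  rw [extCuts_succ]
  split_ifs with hn
  · rw [← not_lt, lt_iff_lt_cutCount hc.1, not_lt]
  · simp [hx, (cutCount_le c x).trans (not_lt.1 hn)]

lemma mem_altPiece_iff (hc : ValidCuts k c) (hxc : x ∉ range c) :
    x ∈ altPiece k c b ↔ x ∈ halfOpenPiece c b := by
  have hcell : ∀ n ≤ k, x ∈ Icc (extCuts k c n) (extCuts k c (n + 1)) ↔
      x ∈ Icc (0 : ℝ) 1 ∧ cutCount c x = n := by
    intro n hn
    constructor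
    · intro hx
      have hx01 : x ∈ Icc (0 : ℝ) 1 :=
        ⟨(extCuts_mem_Icc hc n).1.trans hx.1, hx.2.trans (extCuts_mem_Icc hc (n + 1)).2⟩
      exact ⟨hx01, le_antisymm ((le_extCuts_succ_iff hc hx01.2 n).1 hx.2)
        ((extCuts_le_iff hc hx01.1 hxc hn).1 hx.1)⟩
    · rintro ⟨hx01, rfl⟩
      exact ⟨(extCuts_le_iff hc hx01.1 hxc hn).2 le_rfl, (le_extCuts_succ_iff hc hx01.2 _).2 le_rfl⟩
  simp only [altPiece, halfOpenPiece, mem_iUnion, Finset.mem_range, mem_ofPred_eq,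
    mem_ite_empty_right]
  constructor
  · rintro ⟨n, hn, hb, hx⟩
    obtain ⟨hx01, rfl⟩ := (hcell n (by omega)).1 hx
    exact ⟨hx01, hb⟩
  · rintro ⟨hx01, hb⟩
    have hle := cutCount_le c x
    exact ⟨cutCount c x, by omega, hb, (hcell _ hle).2 ⟨hx01, rfl⟩⟩

lemma pieceVal_altPiece (hc : ValidCuts k c) (b : Bool) (v : ℝ → ℝ) :
    pieceVal v (altPiece k c b) = pieceVal v (halfOpenPiece c b) := by
  refine setIntegral_congr_set ?_
  filter_upwards [(finite_range c).countable.ae_notMem volume] with x hx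
  exact propext (mem_altPiece_iff hc hx)

lemma cutCount_lt_of_mem_iff_notMem (hx : x ∈ Icc (0 : ℝ) 1) (hy : y ∈ Icc (0 : ℝ) 1)
    (hxy : x ≤ y) (h : x ∈ halfOpenPiece c b ↔ y ∉ halfOpenPiece c b) :
    cutCount c x < cutCount c y := by
  refine (cutCount_mono c hxy).lt_of_ne fun heq => ?_
  have : x ∈ halfOpenPiece c b ↔ y ∈ halfOpenPiece c b := by
    simp only [halfOpenPiece, mem_ofPred_eq, heq, hx, hy]
  tauto

lemma alternations_le (z : ℕ → ℝ) (hz : ∀ i ≤ n, z i ∈ Icc (0 : ℝ) 1)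
    (hmono : ∀ i < n, z i ≤ z (i + 1))
    (halt : ∀ i < n, z i ∈ halfOpenPiece c b ↔ z (i + 1) ∉ halfOpenPiece c b) : n ≤ k := by
  have hcount : ∀ i ≤ n, i ≤ cutCount c (z i) := by
    intro i
    induction i with
    | zero => exact fun _ => Nat.zero_le _
    | succ i ih =>
      intro hi
      have := cutCount_lt_of_mem_iff_notMem (hz i (by omega)) (hz _ hi) (hmono i hi) (halt i hi)
      have := ih (by omega)
      omega
  exact (hcount n le_rfl).trans (cutCount_le c _)

/-- `Z ∩ I` is an initial segment of `I`. -/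
def IsInitialOn (Z I : Set ℝ) : Prop :=
  ∀ ⦃x⦄, x ∈ I → ∀ ⦃y⦄, y ∈ I → x ≤ y → y ∈ Z → x ∈ Z

lemma IsInitialOn.mono {Z I J : Set ℝ} (h : IsInitialOn Z J) (hIJ : I ⊆ J) : IsInitialOn Z I :=
  fun _ hx _ hy => h (hIJ hx) (hIJ hy)

lemma isInitialOn_halfOpenPiece {lo hi : ℝ} (hlo : 0 ≤ lo) (hc : ∀ i, c i ∉ Ico lo hi) :
    IsInitialOn (halfOpenPiece c b) (Ioc lo hi) := by
  intro x hx y hy hxy hyZ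
  have hcount : cutCount c x = cutCount c y := cutCount_congr fun i =>
    ⟨fun h => h.trans_le hxy, fun h => lt_of_not_ge fun hxi =>
      hc i ⟨hx.1.le.trans hxi, h.trans_le hy.2⟩⟩
  exact ⟨⟨hlo.trans hx.1.le, hxy.trans hyZ.1.2⟩, hcount ▸ hyZ.2⟩

end Pieces

namespace IsValueDensity

variable {δ Δ a b p r : ℝ} {v : ℝ → ℝ} {S Z : Set ℝ}

lemma le (hv : IsValueDensity δ Δ v) : δ ≤ Δ :=
  (hv.2.1 0 (by simp)).1.trans (hv.2.1 0 (by simp)).2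

lemma integrableOn (hv : IsValueDensity δ Δ v) (hS : S ⊆ Icc 0 1) : IntegrableOn v S := by
  refine IntegrableOn.mono_set ?_ hS
  refine Measure.integrableOn_of_bounded (M := max |δ| |Δ|) (by simp) hv.1.aestronglyMeasurable ?_
  filter_upwards [ae_restrict_mem measurableSet_Icc] with x hx
  exact abs_le_max_abs_abs (hv.2.1 x hx).1 (hv.2.1 x hx).2

lemma pieceVal_nonneg (hv : IsValueDensity δ Δ v) (hδ : 0 ≤ δ) (hS : S ⊆ Icc 0 1)
    (hm : MeasurableSet S) : 0 ≤ pieceVal v S :=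
  setIntegral_nonneg hm fun x hx => hδ.trans (hv.2.1 x (hS hx)).1

lemma pieceVal_mono (hv : IsValueDensity δ Δ v) (hδ : 0 ≤ δ) (hZ : Z ⊆ Icc 0 1)
    (hm : MeasurableSet Z) (hSZ : S ⊆ Z) : pieceVal v S ≤ pieceVal v Z := by
  refine setIntegral_mono_set (hv.integrableOn hZ) ?_ hSZ.eventuallyLE
  filter_upwards [ae_restrict_mem hm] with x hx
  exact hδ.trans (hv.2.1 x (hZ hx)).1

lemma pieceVal_inter_add_diff (hv : IsValueDensity δ Δ v) (hZ : Z ⊆ Icc 0 1)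
    (hm : MeasurableSet S) : pieceVal v (Z ∩ S) + pieceVal v (Z \ S) = pieceVal v Z :=
  integral_inter_add_sdiff hm (hv.integrableOn hZ)

lemma pieceVal_Icc_diff (hv : IsValueDensity δ Δ v) (hS : S ⊆ Icc 0 1) (hm : MeasurableSet S) :
    pieceVal v (Icc 0 1 \ S) = 1 - pieceVal v S := by
  rw [pieceVal, pieceVal, setIntegral_sdiff hm (hv.integrableOn le_rfl) hS, hv.2.2]

lemma pieceVal_Ioc_zero_one (hv : IsValueDensity δ Δ v) : pieceVal v (Ioc 0 1) = 1 := by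
  rw [pieceVal, ← integral_Icc_eq_integral_Ioc, hv.2.2]

lemma pieceVal_halfOpenPiece_not (hv : IsValueDensity δ Δ v) {k : ℕ} (c : Fin k → ℝ) (β : Bool) :
    pieceVal v (halfOpenPiece c (!β)) = 1 - pieceVal v (halfOpenPiece c β) := by
  rw [halfOpenPiece_not,
    hv.pieceVal_Icc_diff (halfOpenPiece_subset c β) (measurableSet_halfOpenPiece c β)]

lemma pieceVal_union (hv : IsValueDensity δ Δ v) (hS : S ⊆ Icc 0 1) (hZ : Z ⊆ Icc 0 1)
    (hSZ : Disjoint S Z) (hm : MeasurableSet Z) :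
    pieceVal v (S ∪ Z) = pieceVal v S + pieceVal v Z :=
  setIntegral_union hSZ hm (hv.integrableOn hS) (hv.integrableOn hZ)

lemma pieceVal_Ioc_add (hv : IsValueDensity δ Δ v) (ha : 0 ≤ a) (hap : a ≤ p) (hpb : p ≤ b)
    (hb : b ≤ 1) : pieceVal v (Ioc a p) + pieceVal v (Ioc p b) = pieceVal v (Ioc a b) := by
  rw [← Ioc_union_Ioc_eq_Ioc hap hpb]
  refine (hv.pieceVal_union ?_ ?_ (Ioc_disjoint_Ioc_of_le le_rfl) measurableSet_Ioc).symm
  · exact Ioc_subset_Icc_self.trans (Icc_subset_Icc ha (hpb.trans hb))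
  · exact Ioc_subset_Icc_self.trans (Icc_subset_Icc (ha.trans hap) hb)

lemma le_pieceVal_Ioc (hv : IsValueDensity δ Δ v) (ha : 0 ≤ a) (hab : a ≤ b) (hb : b ≤ 1) :
    δ * (b - a) ≤ pieceVal v (Ioc a b) := by
  have hS : Ioc a b ⊆ Icc 0 1 := Ioc_subset_Icc_self.trans (Icc_subset_Icc ha hb)
  have h := setIntegral_mono_on (μ := volume) (f := fun _ => δ) (by simp) (hv.integrableOn hS)
    measurableSet_Ioc fun x hx => (hv.2.1 x (hS hx)).1
  simpa [pieceVal, hab, mul_comm] using h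

lemma pieceVal_Ioc_le (hv : IsValueDensity δ Δ v) (ha : 0 ≤ a) (hab : a ≤ b) (hb : b ≤ 1) :
    pieceVal v (Ioc a b) ≤ Δ * (b - a) := by
  have hS : Ioc a b ⊆ Icc 0 1 := Ioc_subset_Icc_self.trans (Icc_subset_Icc ha hb)
  have h := setIntegral_mono_on (μ := volume) (g := fun _ => Δ) (hv.integrableOn hS) (by simp)
    measurableSet_Ioc fun x hx => (hv.2.1 x (hS hx)).2
  simpa [pieceVal, hab, mul_comm] using h

lemma exists_pieceVal_Ioc_eq (hv : IsValueDensity δ Δ v) (ha : 0 ≤ a) (hab : a ≤ b) (hb : b ≤ 1)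
    (hr0 : 0 ≤ r) (hr : r ≤ pieceVal v (Ioc a b)) :
    ∃ q ∈ Icc a b, pieceVal v (Ioc q b) = r := by
  have hint : IntegrableOn v (uIcc b a) := by
    rw [uIcc_of_ge hab]
    exact hv.integrableOn (Icc_subset_Icc ha hb)
  have hcont : ContinuousOn (fun q => -∫ x in b..q, v x) (Icc a b) := by
    rw [← uIcc_of_ge hab]
    exact (intervalIntegral.continuousOn_primitive_interval hint).neg
  have htail : ∀ q ≤ b, -∫ x in b..q, v x = pieceVal v (Ioc q b) := fun q hq => by
    rw [← intervalIntegral.integral_symm, intervalIntegral.integral_of_le hq, pieceVal]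
  obtain ⟨q, hq, hqr⟩ := intermediate_value_Icc' hab hcont
    (show r ∈ Icc _ _ from ⟨by simpa using hr0, by rwa [htail a hab]⟩)
  exact ⟨q, hq, (htail q hq.2).symm.trans hqr⟩

end IsValueDensity

section MyopicBob

variable {k : ℕ} {vA vB vB' : ℝ → ℝ} {c : Fin k → ℝ} {δ Δ δ' Δ' : ℝ}

lemma le_stackelbergValue (hA : IsValueDensity δ Δ vA) (hδ : 0 ≤ δ) (hB : IsValueDensity δ' Δ' vB)
    (hc : ValidCuts k c) {b : Bool} (hhalf : pieceVal vB (halfOpenPiece c b) ≤ 1 / 2) :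
    pieceVal vA (halfOpenPiece c b) ≤ stackelbergValue k vA vB := by
  refine le_csSup ⟨1, ?_⟩ ⟨c, b, hc, ?_, (pieceVal_altPiece hc b vA).symm⟩
  · rintro u ⟨c', b', hc', -, rfl⟩
    rw [pieceVal_altPiece hc', ← hA.2.2]
    exact hA.pieceVal_mono hδ le_rfl measurableSet_Icc (halfOpenPiece_subset _ _)
  · rw [pieceVal_altPiece hc, hB.pieceVal_halfOpenPiece_not]
    linarith

lemma pieceVal_not_myopicBob_le (vA vB : ℝ → ℝ) (T : ℕ) (h : Hist k) (c : Fin k → ℝ) :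
    pieceVal vB (altPiece k c (!myopicBob k vA vB T h c)) ≤
      pieceVal vB (altPiece k c (myopicBob k vA vB T h c)) := by
  unfold myopicBob
  split_ifs <;> simp only [Bool.not_true, Bool.not_false] <;> linarith

lemma pieceVal_not_myopicBob_le_half (hB : IsValueDensity δ Δ vB) (hc : ValidCuts k c) (T : ℕ)
    (h : Hist k) : pieceVal vB (halfOpenPiece c (!myopicBob k vA vB T h c)) ≤ 1 / 2 := by
  have hle := pieceVal_not_myopicBob_le vA vB T h c
  rw [pieceVal_altPiece hc, pieceVal_altPiece hc] at hle
  linarith [hB.pieceVal_halfOpenPiece_not c (myopicBob k vA vB T h c)]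

lemma myopicBob_eq_of_pieceVal_not_le (hB : IsValueDensity δ Δ vB) (hB' : IsValueDensity δ' Δ' vB')
    (hc : ValidCuts k c) (T : ℕ) (h : Hist k)
    (hle : pieceVal vB' (halfOpenPiece c (!myopicBob k vA vB T h c)) ≤
      pieceVal vB (halfOpenPiece c (!myopicBob k vA vB T h c))) :
    myopicBob k vA vB' T h c = myopicBob k vA vB T h c := by
  have htrue := hB.pieceVal_halfOpenPiece_not c true
  have htrue' := hB'.pieceVal_halfOpenPiece_not c true
  simp only [myopicBob, pieceVal_altPiece hc, Bool.not_true] at *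
  split_ifs at hle ⊢ <;> first | rfl | (simp only [Bool.not_true, Bool.not_false] at hle; linarith)

end MyopicBob

section Play

variable {k : ℕ} {SA : AliceStrategy k} {SB SB' : BobStrategy k} {T : ℕ}

/-- Alice's value of the piece she receives in round `t`. -/
def roundUtility (k : ℕ) (vA : ℝ → ℝ) (SA : AliceStrategy k) (SB : BobStrategy k) (T t : ℕ) : ℝ :=
  pieceVal vA (altPiece k (roundCuts k SA SB T t) (!roundChoice k SA SB T t))

lemma roundUtility_eq (hSA : AliceValid k SA) (vA : ℝ → ℝ) (SB : BobStrategy k) (T t : ℕ) :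
    roundUtility k vA SA SB T t =
      pieceVal vA (halfOpenPiece (roundCuts k SA SB T t) (!roundChoice k SA SB T t)) :=
  pieceVal_altPiece (hSA _ _) _ _

lemma aliceRegret_eq_sum_roundUtility (vA vB : ℝ → ℝ) (SA : AliceStrategy k) (SB : BobStrategy k)
    (T : ℕ) : aliceRegret k vA vB SA SB T =
      ∑ t ∈ Finset.range T, (stackelbergValue k vA vB - roundUtility k vA SA SB T t) := rfl

lemma playHist_congr
    (h : ∀ t < T, SB' T (playHist k SA SB T t) (roundCuts k SA SB T t) = roundChoice k SA SB T t) :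
    ∀ t ≤ T, playHist k SA SB' T t = playHist k SA SB T t := by
  intro t
  induction t with
  | zero => exact fun _ => rfl
  | succ t ih =>
    intro ht
    have hchoice := h t ht
    simp only [roundChoice, roundCuts] at hchoice
    simp only [playHist, ih (by omega), hchoice]

lemma roundUtility_congr (vA : ℝ → ℝ)
    (h : ∀ t < T, SB' T (playHist k SA SB T t) (roundCuts k SA SB T t) = roundChoice k SA SB T t)
    {t : ℕ} (ht : t < T) : roundUtility k vA SA SB' T t = roundUtility k vA SA SB T t := by
  have hchoice := h t ht
  simp only [roundChoice, roundCuts] at hchoice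
  simp only [roundUtility, roundChoice, roundCuts, playHist_congr h t ht.le, hchoice]

end Play

section TwoLevel

variable {δ Δ lo hi r E : ℝ} {v : ℝ → ℝ} {L Z : Set ℝ}

/-- The density `v` rescaled by the factor `lo` on `L` and by `hi` off `L`. -/
def twoLevel (L : Set ℝ) (lo hi : ℝ) (v : ℝ → ℝ) : ℝ → ℝ :=
  L.piecewise (fun x => lo * v x) (fun x => hi * v x)

lemma measurable_twoLevel (hv : Measurable v) (hL : MeasurableSet L) :
    Measurable (twoLevel L lo hi v) :=
  (hv.const_mul lo).piecewise hL (hv.const_mul hi)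

lemma pieceVal_twoLevel (hv : IntegrableOn v Z) (hL : MeasurableSet L) :
    pieceVal (twoLevel L lo hi v) Z = lo * pieceVal v (Z ∩ L) + hi * pieceVal v (Z \ L) := by
  rw [pieceVal, twoLevel, integral_piecewise hL (hv.const_mul lo).integrableOn
    (hv.const_mul hi).integrableOn, integral_const_mul, integral_const_mul,
    Measure.restrict_restrict hL, Measure.restrict_restrict hL.compl, inter_comm, inter_comm Lᶜ]
  rfl

-- The fractional knapsack argument: outside `L`, Alice pays `hi / lo ≥ 1 / r` times more of Bob's
-- value for each unit of hers than inside `L`.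
lemma pieceVal_diff_le_of_twoLevel_le (hv : IsValueDensity δ Δ v) (hδ : 0 ≤ δ) (hhi : 0 < hi)
    (hlohi : lo ≤ r * hi) (hL : L ⊆ Icc 0 1) (hLm : MeasurableSet L) (hZ : Z ⊆ Icc 0 1)
    (hZm : MeasurableSet Z)
    (hbudget : pieceVal (twoLevel L lo hi v) Z ≤ lo * pieceVal v L + hi * E) :
    pieceVal v (Z \ L) ≤ E + r * pieceVal v (L \ Z) := by
  rw [pieceVal_twoLevel (hv.integrableOn hZ) hLm] at hbudget
  have hsplit := hv.pieceVal_inter_add_diff hL hZm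
  rw [inter_comm] at hsplit
  have hmiss : 0 ≤ pieceVal v (L \ Z) :=
    hv.pieceVal_nonneg hδ (sdiff_subset.trans hL) (hLm.diff hZm)
  have hpaid : hi * (pieceVal v (Z \ L) - E) ≤ hi * (r * pieceVal v (L \ Z)) :=
    calc hi * (pieceVal v (Z \ L) - E) ≤ lo * pieceVal v (L \ Z) := by
          rw [← hsplit] at hbudget; linarith
      _ ≤ r * hi * pieceVal v (L \ Z) := by gcongr
      _ = hi * (r * pieceVal v (L \ Z)) := by ring
  linarith [le_of_mul_le_mul_left hpaid hhi]

end TwoLevel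

section Bump

variable {lo w h x : ℝ} {Z : Set ℝ}

/-- The zero-mean step function equal to `-h` on `(lo, lo + w]` and to `h` on
`(lo + w, lo + 2 * w]`. -/
def bump (lo w h : ℝ) : ℝ → ℝ :=
  (Ioc lo (lo + w)).indicator (fun _ => -h) + (Ioc (lo + w) (lo + 2 * w)).indicator fun _ => h

lemma measurable_bump (lo w h : ℝ) : Measurable (bump lo w h) :=
  (measurable_const.indicator measurableSet_Ioc).add (measurable_const.indicator measurableSet_Ioc)

lemma abs_bump_le (hh : 0 ≤ h) (x : ℝ) : |bump lo w h x| ≤ h := by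
  by_cases h₁ : x ∈ Ioc lo (lo + w)
  · have h₂ : x ∉ Ioc (lo + w) (lo + 2 * w) := fun hx => hx.1.not_ge h₁.2
    simp [bump, h₁, h₂, abs_of_nonneg hh]
  · by_cases h₂ : x ∈ Ioc (lo + w) (lo + 2 * w) <;> simp [bump, h₁, h₂, abs_of_nonneg hh, hh]

lemma bump_of_notMem (hw : 0 ≤ w) (hx : x ∉ Ioc lo (lo + 2 * w)) : bump lo w h x = 0 := by
  have h₁ : x ∉ Ioc lo (lo + w) := fun hx' => hx ⟨hx'.1, by linarith [hx'.2]⟩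
  have h₂ : x ∉ Ioc (lo + w) (lo + 2 * w) := fun hx' => hx ⟨by linarith [hx'.1], hx'.2⟩
  simp [bump, h₁, h₂]

lemma integrable_bump (lo w h : ℝ) : Integrable (bump lo w h) :=
  .add (IntegrableOn.integrable_indicator (by simp) measurableSet_Ioc)
    (IntegrableOn.integrable_indicator (by simp) measurableSet_Ioc)

lemma pieceVal_bump (lo w h : ℝ) (Z : Set ℝ) :
    pieceVal (bump lo w h) Z = h * (volume.real (Z ∩ Ioc (lo + w) (lo + 2 * w)) -
      volume.real (Z ∩ Ioc lo (lo + w))) := by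
  have hint : ∀ a b r : ℝ, Integrable ((Ioc a b).indicator fun _ => r) (volume.restrict Z) :=
    fun a b r => (IntegrableOn.integrable_indicator (by simp) measurableSet_Ioc).restrict
  rw [pieceVal, bump, integral_add' (hint _ _ _) (hint _ _ _),
    setIntegral_indicator measurableSet_Ioc, setIntegral_indicator measurableSet_Ioc,
    setIntegral_const, setIntegral_const, smul_eq_mul, smul_eq_mul]
  ring

lemma pieceVal_bump_eq_zero (hw : 0 ≤ w) (hZ : Ioc lo (lo + 2 * w) ⊆ Z) :
    pieceVal (bump lo w h) Z = 0 := by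
  rw [pieceVal_bump, inter_eq_right.2 ((Ioc_subset_Ioc_left (by linarith)).trans hZ),
    inter_eq_right.2 ((Ioc_subset_Ioc_right (by linarith)).trans hZ),
    Real.volume_real_Ioc_of_le (by linarith), Real.volume_real_Ioc_of_le (by linarith)]
  ring

lemma pieceVal_bump_eq_neg (hw : 0 ≤ w) (hleft : Ioc lo (lo + w) ⊆ Z)
    (hright : Disjoint Z (Ioc (lo + w) (lo + 2 * w))) :
    pieceVal (bump lo w h) Z = -(h * w) := by
  rw [pieceVal_bump, hright.inter_eq, inter_eq_right.2 hleft,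
    Real.volume_real_Ioc_of_le (by linarith), measureReal_empty]
  ring

lemma pieceVal_bump_nonpos (hw : 0 ≤ w) (hh : 0 ≤ h) (hZ : IsInitialOn Z (Ioc lo (lo + 2 * w))) :
    pieceVal (bump lo w h) Z ≤ 0 := by
  rcases (Z ∩ Ioc (lo + w) (lo + 2 * w)).eq_empty_or_nonempty with hempty | ⟨y, hyZ, hy⟩
  · rw [pieceVal_bump, hempty, measureReal_empty]
    nlinarith [measureReal_nonneg (μ := volume) (s := Z ∩ Ioc lo (lo + w))]
  · have hleft : Ioc lo (lo + w) ⊆ Z := fun x hx =>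
      hZ ⟨hx.1, by linarith [hx.2]⟩ ⟨by linarith [hy.1], hy.2⟩ (hx.2.trans hy.1.le) hyZ
    have hright : volume.real (Z ∩ Ioc (lo + w) (lo + 2 * w)) ≤ w := by
      refine (measureReal_mono inter_subset_right (by simp)).trans_eq ?_
      rw [Real.volume_real_Ioc_of_le (by linarith)]
      ring
    rw [pieceVal_bump, inter_eq_right.2 hleft, Real.volume_real_Ioc_of_le (by linarith)]
    exact mul_nonpos_of_nonneg_of_nonpos hh (by linarith)

end Bump

lemma exists_Ico_forall_notMem {m : ℕ} (A : Finset ℝ) (hA : A.card < m) (a : ℝ) {ℓ : ℝ}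
    (hℓ : 0 < ℓ) : ∃ i < m, ∀ x ∈ A, x ∉ Ico (a + ℓ * i) (a + ℓ * i + ℓ) := by
  have himage : (A.image fun x => ⌊(x - a) / ℓ⌋₊).card < (Finset.range m).card := by
    simpa using Finset.card_image_le.trans_lt hA
  obtain ⟨i, him, hi⟩ := Finset.exists_mem_notMem_of_card_lt_card himage
  refine ⟨i, Finset.mem_range.1 him, fun x hx hxI => hi (Finset.mem_image.2 ⟨x, hx, ?_⟩)⟩
  have hlo : (i : ℝ) ≤ (x - a) / ℓ := (le_div_iff₀ hℓ).2 (by linarith [hxI.1])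
  rw [Nat.floor_eq_iff ((Nat.cast_nonneg i).trans hlo)]
  exact ⟨hlo, (div_lt_iff₀ hℓ).2 (by linarith [hxI.2])⟩

lemma exists_nat_sqrt_div_sqrt_le {k T : ℕ} (hk : 0 < k) (hT : 0 < T) :
    ∃ m : ℕ, √T / √k ≤ m / k ∧ √T / √k / 2 ≤ T / m := by
  have hk' : 1 ≤ √(k : ℝ) := Real.one_le_sqrt.2 (by exact_mod_cast hk)
  have hT' : 1 ≤ √(T : ℝ) := Real.one_le_sqrt.2 (by exact_mod_cast hT)
  have hone : 1 ≤ √(T : ℝ) * √k := one_le_mul_of_one_le_of_one_le hT' hk'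
  have hm := Nat.ceil_lt_add_one (zero_le_one.trans hone)
  refine ⟨⌈√T * √k⌉₊, ?_, ?_⟩
  · calc √T / √k = √T * √k / (√k * √k) := by field_simp
      _ = √T * √k / k := by rw [Real.mul_self_sqrt (Nat.cast_nonneg k)]
      _ ≤ _ := by gcongr; exact Nat.le_ceil _
  · calc √T / √k / 2 = √T * √T / (2 * (√T * √k)) := by field_simp
      _ = T / (2 * (√T * √k)) := by rw [Real.mul_self_sqrt (Nat.cast_nonneg T)]
      _ ≤ _ := by gcongr; linarith

/-- The standing assumptions on Alice's density `v`, together with a point `s` beyond which `v` has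
mass `1/4`. Bob's densities are modelled on `v` by means of a grid between `s` and `1`. -/
structure HardInstance (δ Δ : ℝ) (k : ℕ) (v : ℝ → ℝ) where
  s : ℝ
  δ_pos : 0 < δ
  two_le : 2 ≤ k
  isDensity : IsValueDensity δ Δ v
  s_mem : s ∈ Icc (0 : ℝ) 1
  pieceVal_tail : pieceVal v (Ioc s 1) = 1 / 4

lemma IsValueDensity.nonempty_hardInstance {δ Δ : ℝ} {k : ℕ} {v : ℝ → ℝ}
    (hv : IsValueDensity δ Δ v) (hδ : 0 < δ) (hk : 2 ≤ k) : Nonempty (HardInstance δ Δ k v) := by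
  obtain ⟨s, hs, htail⟩ := hv.exists_pieceVal_Ioc_eq (r := 1 / 4) le_rfl zero_le_one le_rfl
    (by norm_num) (by rw [hv.pieceVal_Ioc_zero_one]; norm_num)
  exact ⟨⟨s, hδ, hk, hv, hs, htail⟩⟩

namespace HardInstance

variable {δ Δ : ℝ} {k : ℕ} {v : ℝ → ℝ}

section Geometry

variable {j : ℕ} {p q x : ℝ}

/-- The mesh of the grid on `[s, 1]`. -/
def width (C : HardInstance δ Δ k v) : ℝ := (1 - C.s) / (2 * k)

/-- The length of the interval `(s, s + margin]` in which the bumps are hidden. -/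
def margin (C : HardInstance δ Δ k v) : ℝ := δ * C.width / (4 * Δ)

/-- The grid points in the right half of `[s, 1]`, running from its midpoint `grid 0` to
`grid k = 1`. -/
def grid (C : HardInstance δ Δ k v) (j : ℕ) : ℝ := C.s + (k + j) * C.width

/-- The cut points `p`, `q`, `grid 2`, …, `grid (k - 1)`. -/
def cuts (C : HardInstance δ Δ k v) (p q : ℝ) : Fin k → ℝ := fun i =>
  if (i : ℕ) = 0 then p else if (i : ℕ) = 1 then q else C.grid i

/-- The set on which Bob's density is low: the even piece of the cuts `s`, `grid 1`, …,
`grid (k - 1)`. -/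
def lowSet (C : HardInstance δ Δ k v) : Set ℝ := halfOpenPiece (C.cuts C.s (C.grid 1)) true

/-- Intervals lying alternately inside (`j` even) and outside (`j` odd) of `lowSet`. -/
def testInterval (C : HardInstance δ Δ k v) : ℕ → Set ℝ
  | 0 => Ioc 0 C.s
  | j + 1 => Ioc (C.grid j) (C.grid (j + 1))

lemma Δ_pos (C : HardInstance δ Δ k v) : 0 < Δ := C.δ_pos.trans_le C.isDensity.le

lemma two_le_cast (C : HardInstance δ Δ k v) : (2 : ℝ) ≤ k := by exact_mod_cast C.two_le

variable (C : HardInstance δ Δ k v)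

lemma one_le_mul_one_sub_s : 1 ≤ 4 * Δ * (1 - C.s) := by
  have := C.isDensity.pieceVal_Ioc_le C.s_mem.1 C.s_mem.2 le_rfl
  rw [C.pieceVal_tail] at this
  linarith

lemma two_mul_width : 2 * k * C.width = 1 - C.s := by
  have := C.two_le_cast
  rw [width, mul_div_cancel₀ _ (by positivity)]

lemma width_pos : 0 < C.width := by
  have hs : 0 < 1 - C.s :=
    pos_of_mul_pos_right (zero_lt_one.trans_le C.one_le_mul_one_sub_s) (by linarith [C.Δ_pos])
  have := C.two_le_cast
  exact div_pos hs (by positivity)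

lemma one_le_mul_width : 1 ≤ 8 * Δ * (k * C.width) := by
  linarith [C.one_le_mul_one_sub_s, congrArg (Δ * ·) C.two_mul_width]

lemma margin_pos : 0 < C.margin :=
  div_pos (mul_pos C.δ_pos C.width_pos) (by linarith [C.Δ_pos])

lemma four_mul_mul_margin : 4 * (Δ * C.margin) = δ * C.width := by
  have := C.Δ_pos.ne'
  rw [margin]
  field_simp

lemma margin_le : C.margin ≤ C.width := by
  have h := C.four_mul_mul_margin
  have hδ : δ * C.width ≤ Δ * C.width :=
    mul_le_mul_of_nonneg_right C.isDensity.le C.width_pos.le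
  have hΔ : 0 < Δ * C.margin := mul_pos C.Δ_pos C.margin_pos
  exact le_of_mul_le_mul_left (by linarith) C.Δ_pos

lemma grid_succ (j : ℕ) : C.grid (j + 1) = C.grid j + C.width := by
  simp only [grid, Nat.cast_add, Nat.cast_one]
  ring

lemma grid_strictMono : StrictMono C.grid :=
  strictMono_nat_of_lt_succ fun j => by linarith [C.grid_succ j, C.width_pos]

lemma grid_last : C.grid k = 1 := by
  rw [grid]
  linarith [C.two_mul_width]

lemma grid_le_one (hj : j ≤ k) : C.grid j ≤ 1 :=
  C.grid_last ▸ C.grid_strictMono.monotone hj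

lemma s_add_margin_le_grid (j : ℕ) : C.s + C.margin ≤ C.grid j := by
  have h0 : C.margin ≤ k * C.width :=
    C.margin_le.trans (le_mul_of_one_le_left C.width_pos.le (by linarith [C.two_le_cast]))
  have hj : C.grid 0 ≤ C.grid j := C.grid_strictMono.monotone (Nat.zero_le j)
  rw [show C.grid 0 = C.s + k * C.width by simp [grid]] at hj
  linarith

lemma s_lt_grid (j : ℕ) : C.s < C.grid j := by
  linarith [C.s_add_margin_le_grid j, C.margin_pos]

lemma validCuts_cuts (hp : C.s ≤ p) (hpq : p ≤ q) (hq : q ≤ C.grid 1) :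
    ValidCuts k (C.cuts p q) := by
  have hgrid : ∀ {n}, 2 ≤ n → q ≤ C.grid n := fun h =>
    hq.trans (C.grid_strictMono.monotone (by omega))
  have h0 := C.s_mem.1
  have h1 := C.grid_le_one (one_le_two.trans C.two_le)
  refine ⟨fun i i' hi => ?_, fun i => ?_⟩
  · have hi : (i : ℕ) ≤ i' := hi
    unfold cuts
    split_ifs <;> first | omega | exact le_rfl | exact hpq | skip
    · exact hpq.trans (hgrid (by omega))
    · exact hgrid (by omega)
    · exact C.grid_strictMono.monotone hi
  · unfold cuts
    split_ifs
    · exact ⟨by linarith, by linarith⟩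
    · exact ⟨by linarith, by linarith⟩
    · exact ⟨by linarith [C.s_lt_grid i], C.grid_le_one i.2.le⟩

lemma cutCount_cuts_of_le (hpq : p ≤ q) (hx : x ≤ C.grid 1) :
    cutCount (C.cuts p q) x = if x ≤ p then 0 else if x ≤ q then 1 else 2 := by
  have hk := C.two_le
  have hgrid : ∀ n, 2 ≤ n → x ≤ C.grid n := fun n h =>
    hx.trans (C.grid_strictMono.monotone (by omega))
  split_ifs with hxp hxq <;> refine cutCount_eq (by omega) fun i => ?_ <;> unfold cuts <;>
    split_ifs with h0 h1
  all_goals grind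

lemma cutCount_cuts_of_mem (hp : p ≤ C.grid j) (hq : q ≤ C.grid j) (hj : j < k)
    (hx : x ∈ Ioc (C.grid j) (C.grid (j + 1))) (hj1 : 1 ≤ j) :
    cutCount (C.cuts p q) x = j + 1 := by
  refine cutCount_eq hj fun i => ?_
  unfold cuts
  split_ifs with h0 h1
  · exact ⟨fun _ => by omega, fun _ => hp.trans_lt hx.1⟩
  · exact ⟨fun _ => by omega, fun _ => hq.trans_lt hx.1⟩
  · rw [Nat.lt_succ_iff]
    refine ⟨fun h => Nat.lt_succ_iff.1 (C.grid_strictMono.lt_iff_lt.1 (h.trans_le hx.2)),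
      fun h => (C.grid_strictMono.monotone h).trans_lt hx.1⟩

lemma cutCount_eq_of_mem_testInterval (hj : j ≤ k) (hx : x ∈ C.testInterval j) :
    cutCount (C.cuts C.s (C.grid 1)) x = j := by
  have hs := C.s_lt_grid
  match j, hx with
  | 0, hx => rw [C.cutCount_cuts_of_le (hs 1).le (hx.2.trans (hs 1).le), if_pos hx.2]
  | 1, hx =>
    rw [C.cutCount_cuts_of_le (hs 1).le hx.2, if_neg ((hs 0).trans hx.1).not_ge, if_pos hx.2]
  | j + 2, hx =>
    exact C.cutCount_cuts_of_mem (hs _).le (C.grid_strictMono.monotone (by omega)) hj hx (by omega)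

lemma halfOpenPiece_cuts (hp : C.s ≤ p) (hpq : p ≤ q) (hq : q ≤ C.grid 1) :
    halfOpenPiece (C.cuts p q) true = C.lowSet ∪ (Ioc C.s p ∪ Ioc q (C.grid 1)) := by
  have h1 : C.grid 1 ≤ 1 := C.grid_le_one (one_le_two.trans C.two_le)
  ext x
  by_cases hx : x ∈ Icc (0 : ℝ) 1
  swap
  · have h0 := C.s_mem.1
    simp only [lowSet, halfOpenPiece, mem_union, mem_ofPred_eq, hx, false_and, false_or, mem_Ioc,
      false_iff]
    rintro (h | h) <;> exact hx ⟨by linarith, by linarith⟩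
  rw [lowSet, mem_union, mem_halfOpenPiece_true hx, mem_halfOpenPiece_true hx]
  rcases le_or_gt x (C.grid 1) with hxg | hxg
  · rw [C.cutCount_cuts_of_le hpq hxg, C.cutCount_cuts_of_le (C.s_lt_grid 1).le hxg]
    grind
  · have hcount : cutCount (C.cuts p q) x = cutCount (C.cuts C.s (C.grid 1)) x := by
      refine cutCount_congr fun i => ?_
      unfold cuts
      split_ifs
      · exact iff_of_true (by linarith) (by linarith)
      · exact iff_of_true (by linarith) (by linarith)
      · rfl
    have hnot : x ∉ Ioc C.s p ∪ Ioc q (C.grid 1) := by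
      rintro (h | h) <;> linarith [h.1, h.2]
    simp only [hcount, hnot, or_false]

lemma lowSet_subset : C.lowSet ⊆ Icc 0 1 := halfOpenPiece_subset _ _

lemma measurableSet_lowSet : MeasurableSet C.lowSet := measurableSet_halfOpenPiece _ _

lemma testInterval_subset (hj : j ≤ k) : C.testInterval j ⊆ Icc 0 1 := by
  have h0 := C.s_mem
  match j with
  | 0 => exact Ioc_subset_Icc_self.trans (Icc_subset_Icc le_rfl h0.2)
  | j + 1 =>
    refine Ioc_subset_Icc_self.trans (Icc_subset_Icc ?_ (C.grid_le_one hj))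
    linarith [h0.1, C.s_lt_grid j]

lemma mem_lowSet_of_mem_testInterval (hj : j ≤ k) (hx : x ∈ C.testInterval j) :
    x ∈ C.lowSet ↔ j % 2 = 0 := by
  rw [lowSet, mem_halfOpenPiece_true (C.testInterval_subset hj hx),
    C.cutCount_eq_of_mem_testInterval hj hx]

lemma disjoint_lowSet_Ioc : Disjoint C.lowSet (Ioc C.s (C.grid 1)) := by
  refine Set.disjoint_left.2 fun x hxL hx => ?_
  rw [lowSet, mem_halfOpenPiece_true (C.lowSet_subset hxL),
    C.cutCount_cuts_of_le (C.s_lt_grid 1).le hx.2, if_neg hx.1.not_ge, if_pos hx.2] at hxL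
  exact absurd hxL (by decide)

lemma Ioc_subset_lowSet : Ioc 0 C.s ⊆ C.lowSet := fun _ hx =>
  (C.mem_lowSet_of_mem_testInterval (j := 0) (Nat.zero_le k) hx).2 rfl

end Geometry

section BaseDensity

variable {j : ℕ} {p q x : ℝ} {Z : Set ℝ}

/-- Alice's value of the part of `(s, grid 1]` that she can add to `lowSet` without exceeding half
of Bob's value. -/
def extra (C : HardInstance δ Δ k v) : ℝ := pieceVal v (Ioc C.s (C.s + C.margin))

/-- Bob's value per unit of Alice's off `lowSet`. It is chosen, together with `lowRate`, so that
Bob's total value is `1` and `lowSet ∪ (s, s + margin]` is worth `1/2` to him. -/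
def highRate (C : HardInstance δ Δ k v) : ℝ := 1 / (2 * (1 - pieceVal v C.lowSet - C.extra))

/-- Bob's value per unit of Alice's on `lowSet`; see `highRate`. -/
def lowRate (C : HardInstance δ Δ k v) : ℝ := (1 / 2 - C.highRate * C.extra) / pieceVal v C.lowSet

/-- Bob's value density before any bump is hidden in it. -/
def baseDensity (C : HardInstance δ Δ k v) : ℝ → ℝ := twoLevel C.lowSet C.lowRate C.highRate v

/-- Alice's Stackelberg value against `baseDensity`. -/
def optValue (C : HardInstance δ Δ k v) : ℝ := pieceVal v C.lowSet + C.extra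

variable (C : HardInstance δ Δ k v)

lemma pieceVal_Ioc_zero_s : pieceVal v (Ioc 0 C.s) = 3 / 4 := by
  have hsplit := C.isDensity.pieceVal_Ioc_add le_rfl C.s_mem.1 C.s_mem.2 le_rfl
  linarith [C.pieceVal_tail, C.isDensity.pieceVal_Ioc_zero_one]

lemma le_pieceVal_testInterval (hj : j ≤ k) : δ * C.width ≤ pieceVal v (C.testInterval j) := by
  have hv := C.isDensity
  match j with
  | 0 =>
    have hwidth : C.width ≤ 1 - C.s := by
      rw [← C.two_mul_width]
      exact le_mul_of_one_le_left C.width_pos.le (by linarith [C.two_le_cast])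
    calc δ * C.width ≤ δ * (1 - C.s) := mul_le_mul_of_nonneg_left hwidth C.δ_pos.le
      _ ≤ pieceVal v (Ioc C.s 1) := hv.le_pieceVal_Ioc C.s_mem.1 C.s_mem.2 le_rfl
      _ ≤ pieceVal v (Ioc 0 C.s) := by rw [C.pieceVal_tail, C.pieceVal_Ioc_zero_s]; norm_num
  | j + 1 =>
    have h := hv.le_pieceVal_Ioc (by linarith [C.s_mem.1, C.s_lt_grid j])
      (C.grid_strictMono (Nat.lt_succ_self j)).le (C.grid_le_one hj)
    rwa [C.grid_succ, add_sub_cancel_left, ← C.grid_succ] at h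

lemma extra_nonneg : 0 ≤ C.extra :=
  C.isDensity.pieceVal_nonneg C.δ_pos.le (Ioc_subset_Icc_self.trans (Icc_subset_Icc C.s_mem.1
    ((C.s_add_margin_le_grid k).trans C.grid_last.le))) measurableSet_Ioc

lemma four_mul_extra_le : 4 * C.extra ≤ δ * C.width := by
  have h := C.isDensity.pieceVal_Ioc_le C.s_mem.1 (by linarith [C.margin_pos])
    ((C.s_add_margin_le_grid k).trans C.grid_last.le)
  rw [add_sub_cancel_left] at h
  exact C.four_mul_mul_margin ▸ mul_le_mul_of_nonneg_left h zero_le_four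

lemma pieceVal_lowSet_mem : pieceVal v C.lowSet ∈ Icc (3 / 4) 1 := by
  have hv := C.isDensity
  constructor
  · rw [← C.pieceVal_Ioc_zero_s]
    exact hv.pieceVal_mono C.δ_pos.le C.lowSet_subset C.measurableSet_lowSet C.Ioc_subset_lowSet
  · rw [← hv.2.2]
    exact hv.pieceVal_mono C.δ_pos.le le_rfl measurableSet_Icc C.lowSet_subset

lemma le_one_sub_pieceVal_lowSet : δ * ((k + 1) * C.width) ≤ 1 - pieceVal v C.lowSet := by
  have hv := C.isDensity
  have hg := C.grid_le_one (one_le_two.trans C.two_le)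
  have hsub : Ioc C.s (C.grid 1) ⊆ Icc 0 1 \ C.lowSet := subset_sdiff.2
    ⟨Ioc_subset_Icc_self.trans (Icc_subset_Icc C.s_mem.1 hg), C.disjoint_lowSet_Ioc.symm⟩
  calc δ * ((k + 1) * C.width) = δ * (C.grid 1 - C.s) := by simp [grid]
    _ ≤ pieceVal v (Ioc C.s (C.grid 1)) := hv.le_pieceVal_Ioc C.s_mem.1 (C.s_lt_grid 1).le hg
    _ ≤ pieceVal v (Icc 0 1 \ C.lowSet) := hv.pieceVal_mono C.δ_pos.le sdiff_subset
        (measurableSet_Icc.diff C.measurableSet_lowSet) hsub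
    _ = 1 - pieceVal v C.lowSet := hv.pieceVal_Icc_diff C.lowSet_subset C.measurableSet_lowSet

lemma one_sub_pieceVal_lowSet_pos : 0 < 1 - pieceVal v C.lowSet := by
  have := C.width_pos
  exact (mul_pos C.δ_pos (by positivity)).trans_le C.le_one_sub_pieceVal_lowSet

lemma four_mul_extra_le_one_sub : 4 * C.extra ≤ 1 - pieceVal v C.lowSet := by
  refine C.four_mul_extra_le.trans (le_trans ?_ C.le_one_sub_pieceVal_lowSet)
  exact mul_le_mul_of_nonneg_left (le_mul_of_one_le_left C.width_pos.le (by simp)) C.δ_pos.le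

lemma highRate_mul : C.highRate * (1 - pieceVal v C.lowSet - C.extra) = 1 / 2 := by
  have hpos : 0 < 1 - pieceVal v C.lowSet - C.extra := by
    linarith [C.one_sub_pieceVal_lowSet_pos, C.four_mul_extra_le_one_sub]
  rw [highRate]
  field_simp

lemma two_le_highRate : 2 ≤ C.highRate := by
  rw [highRate, le_div_iff₀]
  all_goals linarith [C.one_sub_pieceVal_lowSet_pos, C.four_mul_extra_le_one_sub,
    C.extra_nonneg, C.pieceVal_lowSet_mem.1]

lemma highRate_mul_le : C.highRate * δ ≤ 6 * Δ := by
  have hk : 1 / (8 * Δ) ≤ (k + 1) * C.width := by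
    rw [div_le_iff₀ (by linarith [C.Δ_pos])]
    have := mul_pos C.width_pos C.Δ_pos
    linarith [C.one_le_mul_width]
  have hoff : δ / (8 * Δ) ≤ 1 - pieceVal v C.lowSet := by
    refine le_trans ?_ C.le_one_sub_pieceVal_lowSet
    rw [← mul_one_div]
    exact mul_le_mul_of_nonneg_left hk C.δ_pos.le
  rw [div_le_iff₀ (by linarith [C.Δ_pos])] at hoff
  have hgap : δ ≤ 12 * Δ * (1 - pieceVal v C.lowSet - C.extra) := by
    have := mul_le_mul_of_nonneg_left C.four_mul_extra_le_one_sub C.Δ_pos.le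
    have := mul_nonneg C.one_sub_pieceVal_lowSet_pos.le C.Δ_pos.le
    linarith
  calc C.highRate * δ ≤ C.highRate * (12 * Δ * (1 - pieceVal v C.lowSet - C.extra)) :=
        mul_le_mul_of_nonneg_left hgap (by linarith [C.two_le_highRate])
    _ = 6 * Δ := by linear_combination 12 * Δ * C.highRate_mul

lemma lowRate_mul_add_highRate_mul_extra :
    C.lowRate * pieceVal v C.lowSet + C.highRate * C.extra = 1 / 2 := by
  have hpos : 0 < pieceVal v C.lowSet := by linarith [C.pieceVal_lowSet_mem.1]
  rw [lowRate, div_mul_cancel₀ _ hpos.ne']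
  ring

lemma lowRate_mem : C.lowRate ∈ Icc (1 / 3) (2 / 3) := by
  have hlow := C.pieceVal_lowSet_mem
  have hextra : 0 ≤ C.highRate * C.extra :=
    mul_nonneg (by linarith [C.two_le_highRate]) C.extra_nonneg
  have hextra' : C.highRate * (4 * C.extra) ≤ C.highRate * (1 - pieceVal v C.lowSet) :=
    mul_le_mul_of_nonneg_left C.four_mul_extra_le_one_sub (by linarith [C.two_le_highRate])
  have hrate := C.highRate_mul
  rw [lowRate, mem_Icc, le_div_iff₀ (by linarith [hlow.1]), div_le_iff₀ (by linarith [hlow.1])]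
  constructor <;> linarith [hlow.1, hlow.2]

lemma baseDensity_mem (hx : x ∈ Icc (0 : ℝ) 1) :
    C.baseDensity x ∈ Icc (δ / 3) (C.highRate * Δ) := by
  obtain ⟨hδ, hΔ⟩ := C.isDensity.2.1 x hx
  have hv := C.δ_pos.le.trans hδ
  have hscale : ∀ r, 1 / 3 ≤ r → r ≤ C.highRate → r * v x ∈ Icc (δ / 3) (C.highRate * Δ) :=
    fun r hr hr' =>
      ⟨by linarith [mul_le_mul_of_nonneg_right hr hv],
        mul_le_mul hr' hΔ hv (by linarith [C.two_le_highRate])⟩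
  have hlow := C.lowRate_mem
  have hhigh := C.two_le_highRate
  unfold baseDensity twoLevel piecewise
  split_ifs
  · exact hscale _ hlow.1 (by linarith [hlow.2])
  · exact hscale _ (by linarith) le_rfl

lemma highRate_mul_le_div : C.highRate * Δ * (3 / 2) ≤ 9 * Δ ^ 2 / δ := by
  rw [le_div_iff₀ C.δ_pos]
  linarith [mul_le_mul_of_nonneg_right C.highRate_mul_le C.Δ_pos.le]

lemma pieceVal_baseDensity_union (hZ : Z ⊆ Icc 0 1) (hdisj : Disjoint C.lowSet Z) :
    pieceVal C.baseDensity (C.lowSet ∪ Z) =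
      C.lowRate * pieceVal v C.lowSet + C.highRate * pieceVal v Z := by
  rw [baseDensity, pieceVal_twoLevel
    (C.isDensity.integrableOn (union_subset C.lowSet_subset hZ)) C.measurableSet_lowSet,
    inter_eq_right.2 subset_union_left, union_sdiff_left, hdisj.symm.sdiff_eq_left]

lemma isValueDensity_baseDensity : IsValueDensity (δ / 3) (9 * Δ ^ 2 / δ) C.baseDensity := by
  refine ⟨measurable_twoLevel C.isDensity.1 C.measurableSet_lowSet, fun x hx => ?_, ?_⟩
  · have hrate : 0 ≤ C.highRate * Δ :=
      mul_nonneg (by linarith [C.two_le_highRate]) C.Δ_pos.le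
    have hx := C.baseDensity_mem hx
    exact ⟨hx.1, hx.2.trans (by linarith [C.highRate_mul_le_div])⟩
  · have hsplit := C.pieceVal_baseDensity_union sdiff_subset disjoint_sdiff_right
    rw [union_sdiff_cancel C.lowSet_subset,
      C.isDensity.pieceVal_Icc_diff C.lowSet_subset C.measurableSet_lowSet] at hsplit
    rw [← pieceVal, hsplit]
    linarith [C.lowRate_mul_add_highRate_mul_extra, C.highRate_mul]

lemma Ioc_union_Ioc_subset (hp : C.s ≤ p) (hpq : p ≤ q) (hq : q ≤ C.grid 1) :
    Ioc C.s p ∪ Ioc q (C.grid 1) ⊆ Ioc C.s (C.grid 1) :=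
  union_subset (Ioc_subset_Ioc_right (hpq.trans hq)) (Ioc_subset_Ioc_left (hp.trans hpq))

lemma Ioc_s_grid_one_subset : Ioc C.s (C.grid 1) ⊆ Icc 0 1 :=
  Ioc_subset_Icc_self.trans <|
    Icc_subset_Icc C.s_mem.1 (C.grid_le_one (one_le_two.trans C.two_le))

lemma pieceVal_Ioc_union_Ioc (hp : C.s ≤ p) (hpq : p ≤ q) (hq : q ≤ C.grid 1) :
    pieceVal v (Ioc C.s p ∪ Ioc q (C.grid 1)) =
      pieceVal v (Ioc C.s p) + pieceVal v (Ioc q (C.grid 1)) := by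
  have hsub := (C.Ioc_union_Ioc_subset hp hpq hq).trans C.Ioc_s_grid_one_subset
  exact C.isDensity.pieceVal_union (subset_union_left.trans hsub) (subset_union_right.trans hsub)
    (Ioc_disjoint_Ioc_of_le hpq) measurableSet_Ioc

lemma pieceVal_halfOpenPiece_cuts (hp : C.s ≤ p) (hpq : p ≤ q) (hq : q ≤ C.grid 1) :
    pieceVal v (halfOpenPiece (C.cuts p q) true) =
      pieceVal v C.lowSet + (pieceVal v (Ioc C.s p) + pieceVal v (Ioc q (C.grid 1))) := by
  have hsub := C.Ioc_union_Ioc_subset hp hpq hq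
  rw [C.halfOpenPiece_cuts hp hpq hq, C.isDensity.pieceVal_union C.lowSet_subset
    (hsub.trans C.Ioc_s_grid_one_subset) (C.disjoint_lowSet_Ioc.mono_right hsub)
    (measurableSet_Ioc.union measurableSet_Ioc), C.pieceVal_Ioc_union_Ioc hp hpq hq]

lemma pieceVal_baseDensity_cuts (hp : C.s ≤ p) (hpq : p ≤ q) (hq : q ≤ C.grid 1) :
    pieceVal C.baseDensity (halfOpenPiece (C.cuts p q) true) =
      C.lowRate * pieceVal v C.lowSet +
        C.highRate * (pieceVal v (Ioc C.s p) + pieceVal v (Ioc q (C.grid 1))) := by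
  have hsub := C.Ioc_union_Ioc_subset hp hpq hq
  rw [C.halfOpenPiece_cuts hp hpq hq, C.pieceVal_baseDensity_union
    (hsub.trans C.Ioc_s_grid_one_subset) (C.disjoint_lowSet_Ioc.mono_right hsub),
    C.pieceVal_Ioc_union_Ioc hp hpq hq]

lemma optValue_le_stackelbergValue : C.optValue ≤ stackelbergValue k v C.baseDensity := by
  have hp : C.s ≤ C.s + C.margin := by linarith [C.margin_pos]
  have hpq := C.s_add_margin_le_grid 1
  have hbob : pieceVal C.baseDensity (halfOpenPiece (C.cuts (C.s + C.margin) (C.grid 1)) true)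
      ≤ 1 / 2 := by
    rw [C.pieceVal_baseDensity_cuts hp hpq le_rfl, ← C.lowRate_mul_add_highRate_mul_extra]
    simp [pieceVal, extra]
  have h := le_stackelbergValue C.isDensity C.δ_pos.le C.isValueDensity_baseDensity
    (C.validCuts_cuts hp hpq le_rfl) hbob
  rw [C.pieceVal_halfOpenPiece_cuts hp hpq le_rfl] at h
  simpa [pieceVal, optValue, extra] using h

lemma pieceVal_diff_lowSet_le (hZ : Z ⊆ Icc 0 1) (hZm : MeasurableSet Z)
    (hbob : pieceVal C.baseDensity Z ≤ 1 / 2) :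
    pieceVal v (Z \ C.lowSet) ≤ C.extra + 1 / 3 * pieceVal v (C.lowSet \ Z) := by
  refine pieceVal_diff_le_of_twoLevel_le C.isDensity C.δ_pos.le
    (by linarith [C.two_le_highRate]) ?_ C.lowSet_subset C.measurableSet_lowSet hZ hZm
    (hbob.trans_eq C.lowRate_mul_add_highRate_mul_extra.symm)
  linarith [C.lowRate_mem.2, C.two_le_highRate]

lemma pieceVal_le_optValue_sub (hZ : Z ⊆ Icc 0 1) (hZm : MeasurableSet Z)
    (hbob : pieceVal C.baseDensity Z ≤ 1 / 2) :
    pieceVal v Z ≤ C.optValue - 2 / 3 * pieceVal v (C.lowSet \ Z) := by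
  have hsplit := C.isDensity.pieceVal_inter_add_diff hZ C.measurableSet_lowSet
  have hsplit' := C.isDensity.pieceVal_inter_add_diff C.lowSet_subset hZm
  rw [inter_comm] at hsplit'
  rw [optValue]
  linarith [C.pieceVal_diff_lowSet_le hZ hZm hbob]

end BaseDensity

section NearOptimal

variable {j : ℕ} {x y : ℝ} {Z : Set ℝ} (C : HardInstance δ Δ k v)

lemma le_of_mem_testInterval (hx : x ∈ C.testInterval j) (hy : y ∈ C.testInterval (j + 1)) :
    x ≤ y := by
  match j, hx with
  | 0, hx => exact hx.2.trans ((C.s_lt_grid 0).trans hy.1).le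
  | _ + 1, hx => exact hx.2.trans hy.1.le

lemma exists_mem_testInterval_mem_iff (hZ : Z ⊆ Icc 0 1) (hZm : MeasurableSet Z)
    (hbob : pieceVal C.baseDensity Z ≤ 1 / 2)
    (halice : C.optValue - δ * C.width / 8 < pieceVal v Z) (hj : j ≤ k) :
    ∃ z ∈ C.testInterval j, z ∈ Z ↔ j % 2 = 0 := by
  have hv := C.isDensity
  have hvalue := C.pieceVal_le_optValue_sub hZ hZm hbob
  have hadded := C.pieceVal_diff_lowSet_le hZ hZm hbob
  have hpos : 0 < δ * C.width := mul_pos C.δ_pos C.width_pos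
  have htest := C.le_pieceVal_testInterval hj
  by_contra! hcon
  by_cases heven : j % 2 = 0
  · have hsub : C.testInterval j ⊆ C.lowSet \ Z := fun z hz => by
      have := hcon z hz
      have := C.mem_lowSet_of_mem_testInterval hj hz
      exact ⟨by tauto, by tauto⟩
    have := hv.pieceVal_mono C.δ_pos.le (sdiff_subset.trans C.lowSet_subset)
      (C.measurableSet_lowSet.diff hZm) hsub
    linarith
  · have hsub : C.testInterval j ⊆ Z \ C.lowSet := fun z hz => by
      have := hcon z hz
      have := C.mem_lowSet_of_mem_testInterval hj hz
      exact ⟨by tauto, by tauto⟩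
    have := hv.pieceVal_mono C.δ_pos.le (sdiff_subset.trans hZ)
      (hZm.diff C.measurableSet_lowSet) hsub
    linarith [C.four_mul_extra_le]

-- Visiting the `k + 1` test intervals already uses all `k` cuts, so none is left to make the piece
-- alternate within `(s, s + margin]`.
lemma isInitialOn_of_lt_pieceVal {c : Fin k → ℝ} {b : Bool}
    (hbob : pieceVal C.baseDensity (halfOpenPiece c b) ≤ 1 / 2)
    (halice : C.optValue - δ * C.width / 8 < pieceVal v (halfOpenPiece c b)) :
    IsInitialOn (halfOpenPiece c b) (Ioc C.s (C.s + C.margin)) := by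
  have hsub := halfOpenPiece_subset c b
  have hex := fun j (hj : j ≤ k) => C.exists_mem_testInterval_mem_iff hsub
    (measurableSet_halfOpenPiece c b) hbob halice hj
  choose! z hz hzmem using hex
  intro x hx y hy hxy hyZ
  by_contra hxZ
  have hk := C.two_le
  have hx01 : x ∈ Icc (0 : ℝ) 1 := ⟨C.s_mem.1.trans hx.1.le, hxy.trans (hsub hyZ).2⟩
  let u : ℕ → ℝ
    | 0 => z 0
    | 1 => x
    | 2 => y
    | i + 3 => z (i + 1)
  suffices k + 2 ≤ k by omega
  refine alternations_le (c := c) (b := b) u (fun i hi => ?_) (fun i hi => ?_) (fun i hi => ?_)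
  · match i with
    | 0 => exact C.testInterval_subset (Nat.zero_le k) (hz 0 (Nat.zero_le k))
    | 1 => exact hx01
    | 2 => exact hsub hyZ
    | i + 3 => exact C.testInterval_subset (by omega) (hz (i + 1) (by omega))
  · match i with
    | 0 => exact (hz 0 (Nat.zero_le k)).2.trans hx.1.le
    | 1 => exact hxy
    | 2 => exact hy.2.trans ((C.s_add_margin_le_grid 0).trans (hz 1 (by omega)).1.le)
    | i + 3 => exact C.le_of_mem_testInterval (hz _ (by omega)) (hz _ (by omega))
  · match i with
    | 0 => exact iff_of_true ((hzmem 0 (Nat.zero_le k)).2 rfl) hxZ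
    | 1 => exact iff_of_false hxZ (not_not.2 hyZ)
    | 2 => exact iff_of_true hyZ fun h => absurd ((hzmem 1 (by omega)).1 h) (by decide)
    | i + 3 =>
      have h1 := hzmem (i + 1) (by omega)
      have h2 := hzmem (i + 2) (by omega)
      change z (i + 1) ∈ _ ↔ z (i + 2) ∉ _
      rw [h1, h2]
      omega

end NearOptimal

section PerturbedDensity

variable {lo w : ℝ} {Z : Set ℝ}

/-- `baseDensity` with value moved from `(lo, lo + w]` to `(lo + w, lo + 2 * w]`. -/
def perturbedDensity (C : HardInstance δ Δ k v) (lo w : ℝ) : ℝ → ℝ :=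
  C.baseDensity + bump lo w (C.highRate * δ / 2)

variable (C : HardInstance δ Δ k v)

lemma bumpHeight_nonneg : 0 ≤ C.highRate * δ / 2 := by
  have := C.two_le_highRate
  have := C.δ_pos
  positivity

lemma pieceVal_perturbedDensity (hZ : Z ⊆ Icc 0 1) :
    pieceVal (C.perturbedDensity lo w) Z =
      pieceVal C.baseDensity Z + pieceVal (bump lo w (C.highRate * δ / 2)) Z :=
  integral_add' (C.isValueDensity_baseDensity.integrableOn hZ)
    (integrable_bump _ _ _).integrableOn

lemma bump_subset_Ioc_grid (hlo : C.s ≤ lo) (hhi : lo + 2 * w ≤ C.s + C.margin) :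
    Ioc lo (lo + 2 * w) ⊆ Ioc C.s (C.grid 1) :=
  Ioc_subset_Ioc hlo (hhi.trans (C.s_add_margin_le_grid 1))

lemma isValueDensity_perturbedDensity (hw : 0 ≤ w) (hlo : C.s ≤ lo)
    (hhi : lo + 2 * w ≤ C.s + C.margin) :
    IsValueDensity (δ / 3) (9 * Δ ^ 2 / δ) (C.perturbedDensity lo w) := by
  have hbase := C.isValueDensity_baseDensity
  have hsub := C.bump_subset_Ioc_grid hlo hhi
  refine ⟨hbase.1.add (measurable_bump _ _ _), fun x hx => ?_, ?_⟩
  · rw [perturbedDensity, Pi.add_apply]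
    by_cases hxb : x ∈ Ioc lo (lo + 2 * w)
    · have hxL : x ∉ C.lowSet := Set.disjoint_right.1 C.disjoint_lowSet_Ioc (hsub hxb)
      have hhigh : C.baseDensity x = C.highRate * v x := by
        rw [baseDensity, twoLevel, piecewise_eq_of_notMem _ _ _ hxL]
      obtain ⟨hδ, hΔ⟩ := C.isDensity.2.1 x hx
      have hbump := abs_le.1 (abs_bump_le C.bumpHeight_nonneg (lo := lo) (w := w) x)
      have hrate := C.two_le_highRate
      have hscale : ∀ {a b : ℝ}, a ≤ b → C.highRate * a ≤ C.highRate * b :=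
        fun h => mul_le_mul_of_nonneg_left h (by linarith)
      have h2 := mul_le_mul_of_nonneg_right hrate C.δ_pos.le
      rw [hhigh]
      constructor
      · linarith [hscale hδ, C.δ_pos]
      · linarith [hscale hΔ, hscale C.isDensity.le, C.highRate_mul_le_div]
    · rw [bump_of_notMem hw hxb, add_zero]
      exact hbase.2.1 x hx
  · rw [← pieceVal, C.pieceVal_perturbedDensity le_rfl,
      pieceVal_bump_eq_zero hw (hsub.trans C.Ioc_s_grid_one_subset), add_zero, pieceVal, hbase.2.2]

lemma exists_pieceVal_Ioc_grid_eq {p r : ℝ} (hp : p ∈ Icc C.s (C.s + C.margin)) (hr : 0 ≤ r)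
    (hr' : 2 * r ≤ δ * C.width) : ∃ q ∈ Icc (C.s + C.margin) (C.grid 1),
      pieceVal v (Ioc C.s p) + pieceVal v (Ioc q (C.grid 1)) = C.extra + r := by
  have hv := C.isDensity
  have hs := C.s_mem.1
  have hg := C.grid_le_one (one_le_two.trans C.two_le)
  have hmg := C.s_add_margin_le_grid 1
  have hsplit := hv.pieceVal_Ioc_add hs hp.1 hp.2 (hmg.trans hg)
  have hgained : 0 ≤ pieceVal v (Ioc C.s p) := hv.pieceVal_nonneg C.δ_pos.le
    (Ioc_subset_Icc_self.trans (Icc_subset_Icc hs (hp.2.trans (hmg.trans hg)))) measurableSet_Ioc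
  have hlost : 0 ≤ pieceVal v (Ioc p (C.s + C.margin)) := hv.pieceVal_nonneg C.δ_pos.le
    (Ioc_subset_Icc_self.trans (Icc_subset_Icc (hs.trans hp.1) (hmg.trans hg))) measurableSet_Ioc
  have hwidth : C.width ≤ C.grid 1 - (C.s + C.margin) := by
    have hgrid : C.grid 1 = C.s + (k + 1) * C.width := by simp [grid]
    have hk := mul_le_mul_of_nonneg_right C.two_le_cast C.width_pos.le
    linarith [C.margin_le, C.width_pos]
  have hroom : δ * C.width ≤ pieceVal v (Ioc (C.s + C.margin) (C.grid 1)) :=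
    (mul_le_mul_of_nonneg_left hwidth C.δ_pos.le).trans
      (hv.le_pieceVal_Ioc (hs.trans (hp.1.trans hp.2)) hmg hg)
  have hextra := C.four_mul_extra_le
  rw [extra, ← hsplit] at hextra ⊢
  obtain ⟨q, hq, hqr⟩ := hv.exists_pieceVal_Ioc_eq (hs.trans (hp.1.trans hp.2)) hmg hg
    (r := pieceVal v (Ioc p (C.s + C.margin)) + r) (by linarith) (by linarith)
  exact ⟨q, hq, by rw [hqr, add_assoc]⟩

lemma pieceVal_bump_cuts {h q : ℝ} (hw : 0 ≤ w) (hlo : C.s ≤ lo) (hwq : lo + 2 * w ≤ q)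
    (hq : q ≤ C.grid 1) :
    pieceVal (bump lo w h) (halfOpenPiece (C.cuts (lo + w) q) true) = -(h * w) := by
  rw [C.halfOpenPiece_cuts (by linarith) (by linarith) hq]
  refine pieceVal_bump_eq_neg hw (fun x hx => ?_) ?_
  · exact Or.inr (Or.inl ⟨hlo.trans_lt hx.1, hx.2⟩)
  · refine (C.disjoint_lowSet_Ioc.mono_right ?_).union_left (Disjoint.union_left ?_ ?_)
    · exact Ioc_subset_Ioc (by linarith) (hwq.trans hq)
    · exact Ioc_disjoint_Ioc_of_le le_rfl
    · exact (Ioc_disjoint_Ioc_of_le hwq).symm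

-- Cutting in the middle of the bump saves Alice `highRate * δ * w / 2` of Bob's value, which buys
-- her `δ * w / 2` just left of `grid 1`.
lemma optValue_add_le_stackelbergValue (hw : 0 ≤ w) (hlo : C.s ≤ lo)
    (hhi : lo + 2 * w ≤ C.s + C.margin) :
    C.optValue + δ * w / 2 ≤ stackelbergValue k v (C.perturbedDensity lo w) := by
  have hδ := C.δ_pos
  have hp : lo + w ∈ Icc C.s (C.s + C.margin) := ⟨by linarith, by linarith⟩
  have hsmall : δ * w ≤ δ * C.width :=
    mul_le_mul_of_nonneg_left (by linarith [C.margin_le]) hδ.le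
  obtain ⟨q, hq, hqval⟩ := C.exists_pieceVal_Ioc_grid_eq hp (r := δ * w / 2) (by positivity)
    (by linarith)
  have hpq := hp.2.trans hq.1
  have halice := C.pieceVal_halfOpenPiece_cuts hp.1 hpq hq.2
  have hbase := C.pieceVal_baseDensity_cuts hp.1 hpq hq.2
  rw [hqval] at halice hbase
  have hbob : pieceVal (C.perturbedDensity lo w) (halfOpenPiece (C.cuts (lo + w) q) true)
      ≤ 1 / 2 := by
    rw [C.pieceVal_perturbedDensity (halfOpenPiece_subset _ _), hbase,
      C.pieceVal_bump_cuts hw hlo (hhi.trans hq.1) hq.2]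
    linarith [C.lowRate_mul_add_highRate_mul_extra]
  calc C.optValue + δ * w / 2 = pieceVal v (halfOpenPiece (C.cuts (lo + w) q) true) := by
        rw [halice, optValue, add_assoc]
    _ ≤ _ := le_stackelbergValue C.isDensity hδ.le (C.isValueDensity_perturbedDensity hw hlo hhi)
        (C.validCuts_cuts hp.1 hpq hq.2) hbob

end PerturbedDensity

section Regret

variable {lo w : ℝ} {c : Fin k → ℝ} {SA : AliceStrategy k} {T t : ℕ} (C : HardInstance δ Δ k v)

/-- The rounds of play against `baseDensity` in which Alice falls well short of `optValue`. Only in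
these can her cuts reveal where a bump is hidden. -/
def lossyRounds (C : HardInstance δ Δ k v) (SA : AliceStrategy k) (T : ℕ) : Finset ℕ :=
  {t ∈ Finset.range T |
    roundUtility k v SA (myopicBob k v C.baseDensity) T t ≤ C.optValue - δ * C.width / 8}

lemma roundUtility_le_optValue (hSA : AliceValid k SA) (T t : ℕ) :
    roundUtility k v SA (myopicBob k v C.baseDensity) T t ≤ C.optValue := by
  rw [roundUtility_eq hSA]
  set Z := halfOpenPiece _ _
  have hZm : MeasurableSet Z := measurableSet_halfOpenPiece _ _
  have hvalue := C.pieceVal_le_optValue_sub (halfOpenPiece_subset _ _) hZm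
    (pieceVal_not_myopicBob_le_half C.isValueDensity_baseDensity (hSA _ _) _ _)
  have hmissed := C.isDensity.pieceVal_nonneg C.δ_pos.le (sdiff_subset.trans C.lowSet_subset)
    (C.measurableSet_lowSet.diff hZm)
  linarith

lemma card_lossyRounds_mul_le_aliceRegret (hSA : AliceValid k SA) :
    (C.lossyRounds SA T).card * (δ * C.width / 8) ≤
      aliceRegret k v C.baseDensity SA (myopicBob k v C.baseDensity) T := by
  have hopt := C.optValue_le_stackelbergValue
  rw [aliceRegret_eq_sum_roundUtility, ← nsmul_eq_mul]
  refine (Finset.card_nsmul_le_sum _ _ _ fun t ht => ?_).trans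
    (Finset.sum_le_sum_of_subset_of_nonneg (Finset.filter_subset _ _) fun t _ _ => ?_)
  · linarith [(Finset.mem_filter.1 ht).2]
  · linarith [C.roundUtility_le_optValue hSA T t]

lemma myopicBob_perturbedDensity_eq (hw : 0 ≤ w) (hlo : C.s ≤ lo)
    (hhi : lo + 2 * w ≤ C.s + C.margin) (hc : ValidCuts k c) (T : ℕ) (h : Hist k)
    (hinit : IsInitialOn (halfOpenPiece c (!myopicBob k v C.baseDensity T h c))
      (Ioc lo (lo + 2 * w))) :
    myopicBob k v (C.perturbedDensity lo w) T h c = myopicBob k v C.baseDensity T h c := by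
  refine myopicBob_eq_of_pieceVal_not_le C.isValueDensity_baseDensity
    (C.isValueDensity_perturbedDensity hw hlo hhi) hc T h ?_
  rw [C.pieceVal_perturbedDensity (halfOpenPiece_subset _ _)]
  linarith [pieceVal_bump_nonpos hw C.bumpHeight_nonneg hinit]

lemma roundUtility_perturbedDensity_eq (hSA : AliceValid k SA) (hw : 0 ≤ w) (hlo : C.s ≤ lo)
    (hhi : lo + 2 * w ≤ C.s + C.margin)
    (hmiss : ∀ t ∈ C.lossyRounds SA T, ∀ i,
      roundCuts k SA (myopicBob k v C.baseDensity) T t i ∉ Ico lo (lo + 2 * w)) (ht : t < T) :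
    roundUtility k v SA (myopicBob k v (C.perturbedDensity lo w)) T t =
      roundUtility k v SA (myopicBob k v C.baseDensity) T t := by
  refine roundUtility_congr v (fun r hr => ?_) ht
  refine C.myopicBob_perturbedDensity_eq hw hlo hhi (hSA _ _) _ _ ?_
  by_cases hlossy : r ∈ C.lossyRounds SA T
  · exact isInitialOn_halfOpenPiece (C.s_mem.1.trans hlo) (hmiss r hlossy)
  · have halice := not_le.1 fun h => hlossy (Finset.mem_filter.2 ⟨Finset.mem_range.2 hr, h⟩)
    rw [roundUtility_eq hSA] at halice
    exact (C.isInitialOn_of_lt_pieceVal (pieceVal_not_myopicBob_le_half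
      C.isValueDensity_baseDensity (hSA _ _) _ _) halice).mono (Ioc_subset_Ioc hlo hhi)

lemma mul_le_aliceRegret_perturbedDensity (hSA : AliceValid k SA) (hw : 0 ≤ w) (hlo : C.s ≤ lo)
    (hhi : lo + 2 * w ≤ C.s + C.margin)
    (hmiss : ∀ t ∈ C.lossyRounds SA T, ∀ i,
      roundCuts k SA (myopicBob k v C.baseDensity) T t i ∉ Ico lo (lo + 2 * w)) :
    T * (δ * w / 2) ≤ aliceRegret k v (C.perturbedDensity lo w) SA
      (myopicBob k v (C.perturbedDensity lo w)) T := by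
  have hgain := C.optValue_add_le_stackelbergValue hw hlo hhi
  rw [aliceRegret_eq_sum_roundUtility, ← nsmul_eq_mul]
  nth_rw 1 [← Finset.card_range T]
  refine Finset.card_nsmul_le_sum _ _ _ fun t ht => ?_
  rw [C.roundUtility_perturbedDensity_eq hSA hw hlo hhi hmiss (Finset.mem_range.1 ht)]
  linarith [C.roundUtility_le_optValue hSA T t]

lemma exists_forall_lossyRounds_notMem {m : ℕ} (hm : (C.lossyRounds SA T).card * k < m) :
    ∃ lo, C.s ≤ lo ∧ lo + 2 * (C.margin / (2 * m)) ≤ C.s + C.margin ∧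
      ∀ t ∈ C.lossyRounds SA T, ∀ i, roundCuts k SA (myopicBob k v C.baseDensity) T t i ∉
        Ico lo (lo + 2 * (C.margin / (2 * m))) := by
  have hm0 : (0 : ℝ) < m := by exact_mod_cast (Nat.zero_le _).trans_lt hm
  let A : Finset ℝ := (C.lossyRounds SA T ×ˢ Finset.univ).image fun ti : ℕ × Fin k =>
    roundCuts k SA (myopicBob k v C.baseDensity) T ti.1 ti.2
  have hA : A.card < m := Finset.card_image_le.trans_lt (by simpa using hm)
  have hℓ : 0 < C.margin / m := div_pos C.margin_pos hm0
  obtain ⟨i, him, hi⟩ := exists_Ico_forall_notMem A hA C.s hℓ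
  rw [show 2 * (C.margin / (2 * m)) = C.margin / m by field_simp]
  refine ⟨C.s + C.margin / m * i, le_add_of_nonneg_right (by positivity), ?_, fun t ht j => hi _ ?_⟩
  · have him' : (i : ℝ) + 1 ≤ m := by exact_mod_cast him
    calc C.s + C.margin / m * i + C.margin / m = C.s + C.margin / m * (i + 1) := by ring
      _ ≤ C.s + C.margin / m * m := by gcongr
      _ = C.s + C.margin := by rw [div_mul_cancel₀ _ hm0.ne']
  · exact Finset.mem_image.2 ⟨(t, j), by simpa using ht, rfl⟩

lemma exists_le_aliceRegret (hSA : AliceValid k SA) {m : ℕ} {R : ℝ}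
    (hlossy : R ≤ m / k * (δ * C.width / 8)) (hbump : R ≤ T * (δ * (C.margin / (2 * m)) / 2)) :
    ∃ vB, IsValueDensity (δ / 3) (9 * Δ ^ 2 / δ) vB ∧
      R ≤ aliceRegret k v vB SA (myopicBob k v vB) T := by
  rcases lt_or_ge ((C.lossyRounds SA T).card * k) m with hfew | hmany
  · obtain ⟨lo, hlo, hhi, hmiss⟩ := C.exists_forall_lossyRounds_notMem hfew
    have hw : 0 ≤ C.margin / (2 * m) := div_nonneg C.margin_pos.le (by positivity)
    exact ⟨_, C.isValueDensity_perturbedDensity hw hlo hhi,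
      hbump.trans (C.mul_le_aliceRegret_perturbedDensity hSA hw hlo hhi hmiss)⟩
  · refine ⟨_, C.isValueDensity_baseDensity,
      hlossy.trans (le_trans ?_ (C.card_lossyRounds_mul_le_aliceRegret hSA))⟩
    have hk : (0 : ℝ) < k := by linarith [C.two_le_cast]
    refine mul_le_mul_of_nonneg_right ((div_le_iff₀ hk).2 (by exact_mod_cast hmany)) ?_
    linarith [mul_pos C.δ_pos C.width_pos]

lemma div_le_mul_margin : δ ^ 2 / (256 * Δ ^ 2) / k ≤ δ * C.margin / 8 := by
  have hΔ := C.Δ_pos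
  have hk : (0 : ℝ) < k := by linarith [C.two_le_cast]
  rw [div_div, div_le_iff₀ (by positivity)]
  calc δ ^ 2 ≤ δ ^ 2 * (8 * Δ * (k * C.width)) :=
        le_mul_of_one_le_right (sq_nonneg δ) C.one_le_mul_width
    _ = δ * C.margin / 8 * (256 * Δ ^ 2 * k) := by
        linear_combination -(8 * δ * Δ * k) * C.four_mul_mul_margin

end Regret

end HardInstance

lemma exists_sqrt_div_le_aliceRegret {δ Δ : ℝ} {k T : ℕ} {vA : ℝ → ℝ} {SA : AliceStrategy k}
    (hδ : 0 < δ) (hk : 2 ≤ k) (hA : IsValueDensity δ Δ vA) (hSA : AliceValid k SA) (hT : 0 < T) :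
    ∃ vB, IsValueDensity (δ / 3) (9 * Δ ^ 2 / δ) vB ∧
      δ ^ 2 / (256 * Δ ^ 2) * √T / (k : ℝ) ^ ((3 : ℝ) / 2) ≤
        aliceRegret k vA vB SA (myopicBob k vA vB) T := by
  obtain ⟨C⟩ := hA.nonempty_hardInstance hδ hk
  obtain ⟨m, hmany, hbump⟩ := exists_nat_sqrt_div_sqrt_le (zero_lt_two.trans_le hk) hT
  have hmargin := C.margin_pos
  have hrate := C.div_le_mul_margin
  have hpow : (k : ℝ) ^ ((3 : ℝ) / 2) = k * √k := by
    rw [Real.sqrt_eq_rpow, ← Real.rpow_one_add' (Nat.cast_nonneg k) (by norm_num)]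
    norm_num
  rw [show δ ^ 2 / (256 * Δ ^ 2) * √T / (k : ℝ) ^ ((3 : ℝ) / 2) =
    √T / √k * (δ ^ 2 / (256 * Δ ^ 2) / k) by rw [hpow]; field_simp]
  refine C.exists_le_aliceRegret hSA (m := m) ?_ ?_
  · have hle : δ * C.margin ≤ δ * C.width := mul_le_mul_of_nonneg_left C.margin_le hδ.le
    exact mul_le_mul hmany (by linarith) (by positivity) (by positivity)
  · calc √T / √k * (δ ^ 2 / (256 * Δ ^ 2) / k) ≤ √T / √k * (δ * C.margin / 8) := by gcongr
      _ = √T / √k / 2 * (δ * C.margin / 4) := by ring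
      _ ≤ T / m * (δ * C.margin / 4) := by gcongr
      _ = T * (δ * (C.margin / (2 * m)) / 2) := by field_simp; norm_num

/-- `k ≥ 2` cuts, myopic Bob, lower bound: for all `0 < δ ≤ Δ` there exist
`c > 0` and `T₀`, and density bounds `0 < δ' ≤ Δ'` depending only on `δ, Δ`, such that for
every `k ≥ 2`, every Alice value density, every valid deterministic Alice strategy, and every
horizon `T ≥ T₀`, some Bob value density forces Alice's Stackelberg regret against the myopic
Bob to be at least `c·√T/k^{3/2}`. -/
theorem k_cut_myopic_lower (δ Δ : ℝ) (hδ : 0 < δ) (hδΔ : δ ≤ Δ) :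
    ∃ (c : ℝ) (T₀ : ℕ) (δ' Δ' : ℝ), 0 < c ∧ 0 < δ' ∧ δ' ≤ Δ' ∧
      ∀ k : ℕ, 2 ≤ k →
        ∀ vA : ℝ → ℝ, IsValueDensity δ Δ vA →
          ∀ SA : AliceStrategy k, AliceValid k SA →
            ∀ T : ℕ, T₀ ≤ T →
              ∃ vB : ℝ → ℝ, IsValueDensity δ' Δ' vB ∧
                c * Real.sqrt T / (k : ℝ) ^ ((3 : ℝ) / 2) ≤
                  aliceRegret k vA vB SA (myopicBob k vA vB) T := by
  refine ⟨δ ^ 2 / (256 * Δ ^ 2), 1, δ / 3, 9 * Δ ^ 2 / δ, ?_, by positivity, ?_, ?_⟩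
  · have := hδ.trans_le hδΔ
    positivity
  · rw [le_div_iff₀ hδ]
    nlinarith
  · exact fun k hk vA hA SA hSA T hT => exists_sqrt_div_le_aliceRegret hδ hk hA hSA hT

end
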